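/- arXiv:0806.2525 — 2 statements merged into one kernel-verified Lean document; each statement's English description precedes it below -/
import Mathlib

section
/- Suppose Q is a transition kernel on ℤ^d with invariant measure π satisfying c ≤ π(x) ≤ C for all x (0 < c ≤ C < ∞), and suppose the transition kernel Q*Q satisfies the d-dimensional Nash inequality: there is κ > 0 with 𝓔_{Q*Q}(f,f) ≥ κ ‖f‖_{L²(π)}^{2+4/d} ‖f‖_{L¹(π)}^{−4/d} for every f ∈ ℓ₀(ℤ^d). Then there exists a constant C₀ > 0, depending only on d, c, C and κ, such that ‖Qⁿ f‖_{L²(π)}² ≤ C₀ n^{−d/2} ‖f‖_{L¹(π)}² for every n ≥ 1 and every f ∈ ℓ₀(ℤ^d), i.e. ‖Qⁿ‖²_{L¹(π)→L²(π)} ≤ C₀ n^{−d/2}. -/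
open scoped Classical

noncomputable section

/-- Points of `ℤ^d`. -/
abbrev Zd (d : ℕ) := Fin d → ℤ

/-- Euclidean norm on `ℤ^d`. -/
def eucNorm {d : ℕ} (v : Zd d) : ℝ := Real.sqrt (∑ i, ((v i : ℝ)) ^ 2)

/-- `n`-fold composition of a transition kernel. -/
def kerpow {d : ℕ} (Q : Zd d → Zd d → ℝ) : ℕ → Zd d → Zd d → ℝ
  | 0 => fun x y => if x = y then 1 else 0
  | m + 1 => fun x y => ∑' zz : Zd d, kerpow Q m x zz * Q zz y

/-- Adjoint of a kernel with respect to the measure `π`. -/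
def adjK {d : ℕ} (π : Zd d → ℝ) (Q : Zd d → Zd d → ℝ) (x y : Zd d) : ℝ :=
  π y * Q y x / π x

/-- Composition of two kernels. -/
def compK {d : ℕ} (Q₁ Q₂ : Zd d → Zd d → ℝ) (x y : Zd d) : ℝ :=
  ∑' zz : Zd d, Q₁ x zz * Q₂ zz y

/-- Dirichlet form of the kernel `Q` with respect to `π`. -/
def dirichlet {d : ℕ} (π : Zd d → ℝ) (Q : Zd d → Zd d → ℝ) (f : Zd d → ℝ) : ℝ :=
  (1 / 2) * ∑' p : Zd d × Zd d, (f p.2 - f p.1) ^ 2 * π p.1 * Q p.1 p.2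

/-- `L²(π)`-norm. -/
def l2norm {d : ℕ} (π : Zd d → ℝ) (f : Zd d → ℝ) : ℝ := Real.sqrt (∑' x, (f x) ^ 2 * π x)

/-- `L¹(π)`-norm. -/
def l1norm {d : ℕ} (π : Zd d → ℝ) (f : Zd d → ℝ) : ℝ := ∑' x, |f x| * π x

/-- Action of the `n`-step kernel on a function. -/
def kerApply {d : ℕ} (Q : Zd d → Zd d → ℝ) (f : Zd d → ℝ) (x : Zd d) : ℝ :=
  ∑' y, Q x y * f y

/-!
Averaging over the common ancestor `z` of `x` and `y` in `Q*Q(x,y)` gives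
`𝓔_{Q*Q}(f,f) = ‖f‖₂² - ‖Qf‖₂²` for `f ∈ L²(π)`, so a Nash inequality for `Q*Q` bounds the loss of
`L²` norm in one step from below. Since `Q` contracts `L¹(π)`, the sequence `aₙ = ‖Qⁿf‖₂²` satisfies
`aₙ₊₁ ≤ aₙ - k aₙ^(1+2/D)` with `k = κ ‖f‖₁^(-4/D)`; then `aₙ^(-2/D)` grows by at least `2k/D` at
each step, which is the claimed decay. The Nash inequality is only assumed for finitely supported
functions, which `Q` need not preserve: it is used on truncations, and the one-step estimate passes
to the limit by Fatou's lemma.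
-/

open Filter Topology

section Series

variable {α β ι : Type*}

theorem hasSum_prod_of_nonneg {f : α × β → ℝ} {g : α → ℝ} {a : ℝ} (hf : ∀ p, 0 ≤ f p)
    (hg : ∀ x, HasSum (fun y => f (x, y)) (g x)) (ha : HasSum g a) : HasSum f a := by
  have hs : Summable f := (summable_prod_of_nonneg hf).2
    ⟨fun x => (hg x).summable, by simpa only [(hg _).tsum_eq] using ha.summable⟩
  have hsum := hs.hasSum
  rwa [(hsum.prod_fiberwise hg).unique ha] at hsum

theorem hasSum_tsum_swap_of_nonneg {f : α × β → ℝ} {g : α → ℝ} {a : ℝ} (hf : ∀ p, 0 ≤ f p)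
    (hg : ∀ x, HasSum (fun y => f (x, y)) (g x)) (ha : HasSum g a) :
    HasSum (fun y => ∑' x, f (x, y)) a := by
  have hswap := (Equiv.prodComm β α).hasSum_iff.2 (hasSum_prod_of_nonneg hf hg ha)
  exact hswap.prod_fiberwise fun y => (hswap.summable.prod_factor y).hasSum

theorem summable_and_tsum_le_of_tendsto {l : Filter ι} [l.NeBot] {u : ι → α → ℝ} {v : α → ℝ}
    {b : ι → ℝ} {B : ℝ} (hu : ∀ i x, 0 ≤ u i x) (hsum : ∀ i, Summable (u i))
    (hle : ∀ i, ∑' x, u i x ≤ b i) (huv : ∀ x, Tendsto (fun i => u i x) l (𝓝 (v x)))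
    (hb : Tendsto b l (𝓝 B)) : Summable v ∧ ∑' x, v x ≤ B := by
  have hv : 0 ≤ v := fun x => ge_of_tendsto' (huv x) fun i => hu i x
  have hpartial : ∀ t : Finset α, ∑ x ∈ t, v x ≤ B := fun t =>
    le_of_tendsto_of_tendsto' (tendsto_finsetSum t fun x _ => huv x) hb fun i =>
      ((hsum i).sum_le_tsum t fun x _ => hu i x).trans (hle i)
  exact ⟨summable_of_sum_le hv hpartial, Real.tsum_le_of_sum_le hv hpartial⟩

theorem hasSum_comp_indicator {φ : α → ℝ → ℝ} (hφ : ∀ x, φ x 0 = 0) (f : α → ℝ)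
    (s : Finset α) :
    HasSum (fun x => φ x ((s : Set α).indicator f x)) (∑ x ∈ s, φ x (f x)) := by
  rw [← Finset.sum_congr rfl fun x hx => show φ x ((s : Set α).indicator f x) = φ x (f x) by
    rw [Set.indicator_of_mem (Finset.mem_coe.2 hx)]]
  exact hasSum_sum_of_ne_finset_zero fun x hx => by simp [hx, hφ]

theorem summable_mul_of_summable_mul_sq {q f : α → ℝ} (hq : ∀ x, 0 ≤ q x) (hqs : Summable q)
    (hf : Summable fun x => q x * f x ^ 2) : Summable fun x => q x * f x := by
  refine Summable.of_norm_bounded (hqs.add hf) fun x => ?_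
  rw [Real.norm_eq_abs, abs_mul, abs_of_nonneg (hq x), ← mul_one_add]
  gcongr
  · exact hq x
  · nlinarith [sq_nonneg (|f x| - 1), sq_abs (f x)]

/-- The variance of `f` under `q` is half the mean square distance of two independent samples. -/
theorem hasSum_sq_sub_mul {q f : α → ℝ} (hq : ∀ x, 0 ≤ q x) (hq1 : HasSum q 1)
    (hf : Summable fun x => q x * f x ^ 2) :
    HasSum (fun p : α × α => (f p.2 - f p.1) ^ 2 * (q p.1 * q p.2))
      (2 * (∑' x, q x * f x ^ 2 - (∑' x, q x * f x) ^ 2)) := by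
  have hmean := summable_mul_of_summable_mul_sq hq hq1.summable hf
  have hsq : 0 ≤ fun x => q x * f x ^ 2 := fun x => mul_nonneg (hq x) (sq_nonneg _)
  have hfst := hf.hasSum.mul hq1 (hf.mul_of_nonneg hq1.summable hsq hq)
  have hsnd := hq1.mul hf.hasSum (hq1.summable.mul_of_nonneg hf hq hsq)
  have hcross := hmean.hasSum.mul hmean.hasSum
    (summable_mul_of_summable_norm hmean.norm hmean.norm)
  have hvar := ((hfst.add hsnd).sub (hcross.mul_left 2)).congr_fun
    (g := fun p : α × α => (f p.2 - f p.1) ^ 2 * (q p.1 * q p.2)) fun p => by ring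
  rwa [mul_one, one_mul, ← two_mul, ← sq, ← mul_sub] at hvar

end Series

section Kernels

variable {α β γ : Type*}

/-- The action `(Pf)(x) = ∑ P(x,y) f(y)` of a kernel on functions, as `kerApply` on any types. -/
def kernelApply (P : α → β → ℝ) (f : β → ℝ) (x : α) : ℝ :=
  ∑' y, P x y * f y

/-- The composition `PR` of two kernels, as `compK` on any types. -/
def kernelComp (P : α → β → ℝ) (R : β → γ → ℝ) (x : α) (z : γ) : ℝ :=
  ∑' y, P x y * R y z

/-- The adjoint `Q*` of a kernel in `L²(π)`, as `adjK` on any type. -/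
def kernelAdjoint (π : α → ℝ) (Q : α → α → ℝ) (x y : α) : ℝ :=
  π y * Q y x / π x

/-- The Dirichlet form `𝓔_K(f,f)`, as `dirichlet` on any type. -/
def dirichletForm (π : α → ℝ) (K : α → α → ℝ) (f : α → ℝ) : ℝ :=
  (1 / 2) * ∑' p : α × α, (f p.2 - f p.1) ^ 2 * π p.1 * K p.1 p.2

/-- The norm of `L²(π)`, as `l2norm` on any type; it is `0` if `f` is not in `L²(π)`. -/
def weightedL2Norm (π : α → ℝ) (f : α → ℝ) : ℝ :=
  Real.sqrt (∑' x, f x ^ 2 * π x)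

/-- The norm of `L¹(π)`, as `l1norm` on any type; it is `0` if `f` is not in `L¹(π)`. -/
def weightedL1Norm (π : α → ℝ) (f : α → ℝ) : ℝ :=
  ∑' x, |f x| * π x

/-- Invariance of the measure `π` under the kernel `P`, with convergence of the series included. -/
def IsInvariantMeasure (π : α → ℝ) (P : α → α → ℝ) : Prop :=
  ∀ y, HasSum (fun x => π x * P x y) (π y)

/-- The Nash inequality of dimension `D` with constant `κ` for the kernel `K`, tested on finitely
supported functions. -/
def NashInequality (π : α → ℝ) (K : α → α → ℝ) (D κ : ℝ) : Prop :=
  ∀ f : α → ℝ, (Function.support f).Finite →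
    κ * weightedL2Norm π f ^ (2 + 4 / D) * weightedL1Norm π f ^ (-4 / D) ≤ dirichletForm π K f

variable {π : α → ℝ} {P Q : α → α → ℝ} {f : α → ℝ}

theorem weightedL2Norm_sq (hπ : ∀ x, 0 < π x) (f : α → ℝ) :
    weightedL2Norm π f ^ 2 = ∑' x, f x ^ 2 * π x :=
  Real.sq_sqrt (tsum_nonneg fun x => mul_nonneg (sq_nonneg _) (hπ x).le)

theorem weightedL1Norm_pos (hπ : ∀ x, 0 < π x) (hf : Summable fun x => |f x| * π x)
    (hf0 : f ≠ 0) : 0 < weightedL1Norm π f := by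
  obtain ⟨x, hx⟩ := Function.ne_iff.1 hf0
  exact hf.tsum_pos (fun y => mul_nonneg (abs_nonneg _) (hπ y).le) x
    (mul_pos (abs_pos.2 hx) (hπ x))

theorem abs_kernelApply_le {P : α → β → ℝ} {f : β → ℝ} (hP : ∀ x y, 0 ≤ P x y) (x : α)
    (hf : Summable fun y => P x y * |f y|) :
    |kernelApply P f x| ≤ kernelApply P (fun y => |f y|) x := by
  have habs : ∀ y, ‖P x y * f y‖ = P x y * |f y| := fun y => by
    rw [Real.norm_eq_abs, abs_mul, abs_of_nonneg (hP x y)]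
  exact tsum_of_norm_bounded hf.hasSum fun y => (habs y).le

namespace IsInvariantMeasure

theorem hasSum_mul_apply (hinv : IsInvariantMeasure π P) (f : α → ℝ) (y : α) :
    HasSum (fun x => π x * (P x y * f y)) (f y * π y) := by
  simpa only [mul_assoc, mul_comm (f y)] using (hinv y).mul_right (f y)

theorem summable_kernel_mul_of_nonneg (hinv : IsInvariantMeasure π P) (hP : ∀ x y, 0 ≤ P x y)
    (hπ : ∀ x, 0 < π x) (hf : Summable fun y => f y * π y) (hf0 : ∀ y, 0 ≤ f y) (x : α) :
    Summable fun y => P x y * f y := by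
  refine (summable_mul_left_iff (hπ x).ne').1 <| Summable.of_nonneg_of_le
    (fun y => mul_nonneg (hπ x).le (mul_nonneg (hP x y) (hf0 y))) (fun y => ?_) hf
  exact le_hasSum (hinv.hasSum_mul_apply f y) x fun z _ =>
    mul_nonneg (hπ z).le (mul_nonneg (hP z y) (hf0 y))

theorem hasSum_kernelApply_mul (hinv : IsInvariantMeasure π P) (hP : ∀ x y, 0 ≤ P x y)
    (hπ : ∀ x, 0 < π x) (hf : Summable fun y => f y * π y) (hf0 : ∀ y, 0 ≤ f y) :
    HasSum (fun x => kernelApply P f x * π x) (∑' y, f y * π y) := by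
  convert hasSum_tsum_swap_of_nonneg (f := fun p : α × α => π p.2 * (P p.2 p.1 * f p.1))
    (fun p => mul_nonneg (hπ _).le (mul_nonneg (hP _ _) (hf0 _)))
    (fun y => hinv.hasSum_mul_apply f y) hf.hasSum using 2 with x
  exact (mul_comm _ _).trans tsum_mul_left.symm

theorem comp {R : α → α → ℝ} (hinvP : IsInvariantMeasure π P) (hinvR : IsInvariantMeasure π R)
    (hP : ∀ x y, 0 ≤ P x y) (hR : ∀ x y, 0 ≤ R x y) (hπ : ∀ x, 0 < π x) :
    IsInvariantMeasure π (kernelComp P R) := fun z => by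
  have hcol : HasSum (fun y => R y z * π y) (π z) := by simpa only [mul_comm] using hinvR z
  have h := hinvP.hasSum_kernelApply_mul hP hπ hcol.summable fun y => hR y z
  rw [hcol.tsum_eq] at h
  exact h.congr_fun fun x => mul_comm _ _

theorem summable_abs_kernelApply_and_weightedL1Norm_le (hinv : IsInvariantMeasure π P)
    (hP : ∀ x y, 0 ≤ P x y) (hπ : ∀ x, 0 < π x) (hf : Summable fun x => |f x| * π x) :
    (Summable fun x => |kernelApply P f x| * π x) ∧
      weightedL1Norm π (kernelApply P f) ≤ weightedL1Norm π f := by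
  have hsum := hinv.hasSum_kernelApply_mul hP hπ hf fun y => abs_nonneg (f y)
  have hle : ∀ x, |kernelApply P f x| * π x ≤ kernelApply P (fun y => |f y|) x * π x := fun x =>
    mul_le_mul_of_nonneg_right (abs_kernelApply_le hP x <|
      hinv.summable_kernel_mul_of_nonneg hP hπ hf (fun y => abs_nonneg _) x) (hπ x).le
  have hs : Summable fun x => |kernelApply P f x| * π x :=
    Summable.of_nonneg_of_le (fun x => mul_nonneg (abs_nonneg _) (hπ x).le) hle hsum.summable
  exact ⟨hs, (hs.tsum_le_tsum hle hsum.summable).trans_eq hsum.tsum_eq⟩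

theorem summable_kernel_mul (hinv : IsInvariantMeasure π P) (hP : ∀ x y, 0 ≤ P x y)
    (hπ : ∀ x, 0 < π x) (hf : Summable fun x => |f x| * π x) (x : α) :
    Summable fun y => P x y * f y := by
  refine (hinv.summable_kernel_mul_of_nonneg hP hπ hf (fun y => abs_nonneg _) x).of_norm_bounded
    fun y => ?_
  rw [Real.norm_eq_abs, abs_mul, abs_of_nonneg (hP x y)]

theorem kernelApply_kernelComp {R : α → α → ℝ} (hinvP : IsInvariantMeasure π P)
    (hinvR : IsInvariantMeasure π R) (hP : ∀ x y, 0 ≤ P x y) (hR : ∀ x y, 0 ≤ R x y)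
    (hπ : ∀ x, 0 < π x) (hf : Summable fun x => |f x| * π x) :
    kernelApply (kernelComp P R) f = kernelApply P (kernelApply R f) := by
  funext x
  have habs : Summable fun p : α × α => P x p.1 * (R p.1 p.2 * |f p.2|) :=
    (hasSum_prod_of_nonneg
      (fun p => mul_nonneg (hP _ _) (mul_nonneg (hR _ _) (abs_nonneg _)))
      (fun y => (hinvR.summable_kernel_mul_of_nonneg hR hπ hf
        (fun z => abs_nonneg _) y).hasSum.mul_left (P x y))
      (hinvP.summable_kernel_mul_of_nonneg hP hπ
        (hinvR.hasSum_kernelApply_mul hR hπ hf fun z => abs_nonneg _).summable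
        (fun y => tsum_nonneg fun z => mul_nonneg (hR _ _) (abs_nonneg _)) x).hasSum).summable
  have hsum : Summable (Function.uncurry fun y z => P x y * (R y z * f z)) := by
    refine habs.of_norm_bounded fun p => ?_
    rw [Function.uncurry, Real.norm_eq_abs, abs_mul, abs_mul, abs_of_nonneg (hP _ _),
      abs_of_nonneg (hR _ _)]
  simp only [kernelApply, kernelComp, ← tsum_mul_right, ← tsum_mul_left, mul_assoc]
  exact hsum.tsum_comm

end IsInvariantMeasure

theorem mul_kernelComp_kernelAdjoint (hπ : ∀ x, 0 < π x) (Q : α → α → ℝ) (x y : α) :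
    π x * kernelComp (kernelAdjoint π Q) Q x y = ∑' z, π z * (Q z x * Q z y) := by
  rw [kernelComp, ← tsum_mul_left]
  refine tsum_congr fun z => ?_
  have := (hπ x).ne'
  simp only [kernelAdjoint]
  field_simp

/-- `𝓔_{Q*Q}(f,f)` is the `π`-average of the variance of `f` under `Q(z,·)`. -/
theorem summable_kernelApply_sq_and_dirichletForm_eq (hQ : ∀ x y, 0 ≤ Q x y)
    (hQ1 : ∀ x, HasSum (Q x) 1) (hπ : ∀ x, 0 < π x) (hinv : IsInvariantMeasure π Q)
    (hf : Summable fun x => f x ^ 2 * π x) :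
    (Summable fun x => kernelApply Q f x ^ 2 * π x) ∧
      dirichletForm π (kernelComp (kernelAdjoint π Q) Q) f =
        ∑' x, f x ^ 2 * π x - ∑' x, kernelApply Q f x ^ 2 * π x := by
  have hmean := hinv.hasSum_kernelApply_mul hQ hπ hf fun y => sq_nonneg (f y)
  have hvar := fun z => hasSum_sq_sub_mul (hQ z) (hQ1 z)
    (hinv.summable_kernel_mul_of_nonneg hQ hπ hf (fun y => sq_nonneg _) z)
  have hjensen : ∀ z, kernelApply Q f z ^ 2 ≤ kernelApply Q (fun y => f y ^ 2) z := fun z => by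
    have := (hvar z).nonneg fun p => mul_nonneg (sq_nonneg _) (mul_nonneg (hQ _ _) (hQ _ _))
    simp only [kernelApply]
    linarith
  have hs : Summable fun z => kernelApply Q f z ^ 2 * π z :=
    Summable.of_nonneg_of_le (fun z => mul_nonneg (sq_nonneg _) (hπ z).le)
      (fun z => mul_le_mul_of_nonneg_right (hjensen z) (hπ z).le) hmean.summable
  refine ⟨hs, ?_⟩
  have henergy := hasSum_tsum_swap_of_nonneg
    (f := fun p : α × α × α =>
      π p.1 * ((f p.2.2 - f p.2.1) ^ 2 * (Q p.1 p.2.1 * Q p.1 p.2.2)))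
    (fun p => mul_nonneg (hπ _).le
      (mul_nonneg (sq_nonneg _) (mul_nonneg (hQ _ _) (hQ _ _))))
    (fun z => (hvar z).mul_left (π z))
    (((hmean.sub hs.hasSum).mul_left 2).congr_fun fun z => by simp only [kernelApply]; ring)
  rw [dirichletForm, tsum_congr fun p => ?_, henergy.tsum_eq]
  · ring
  · rw [mul_assoc, mul_kernelComp_kernelAdjoint hπ, ← tsum_mul_left]
    exact tsum_congr fun z => by ring

theorem summable_abs_mul_and_sq_mul_of_finite_support (hf : (Function.support f).Finite)
    (π : α → ℝ) : (Summable fun x => |f x| * π x) ∧ Summable fun x => f x ^ 2 * π x :=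
  ⟨summable_of_hasFiniteSupport <| hf.subset fun x hx hfx => hx (by simp [hfx]),
    summable_of_hasFiniteSupport <| hf.subset fun x hx hfx => hx (by simp [hfx])⟩

theorem tendsto_kernelApply_indicator {P : α → β → ℝ} {f : β → ℝ} {x : α}
    (hf : Summable fun y => P x y * f y) :
    Tendsto (fun s : Finset β => kernelApply P ((s : Set β).indicator f) x) atTop
      (𝓝 (kernelApply P f x)) :=
  hf.hasSum.congr fun s =>
    (hasSum_comp_indicator (φ := fun y t => P x y * t) (fun _ => mul_zero _) f s).tsum_eq.symm

theorem weightedL1Norm_indicator_le (hπ : ∀ x, 0 < π x) (hf : Summable fun x => |f x| * π x)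
    (s : Finset α) : weightedL1Norm π ((s : Set α).indicator f) ≤ weightedL1Norm π f :=
  (hasSum_comp_indicator (φ := fun x t => |t| * π x) (by simp) f s).tsum_eq.trans_le <|
    hf.sum_le_tsum s fun x _ => mul_nonneg (abs_nonneg _) (hπ x).le

theorem tendsto_sq_weightedL2Norm_indicator (hπ : ∀ x, 0 < π x)
    (hf : Summable fun x => f x ^ 2 * π x) :
    Tendsto (fun s : Finset α => weightedL2Norm π ((s : Set α).indicator f) ^ 2) atTop
      (𝓝 (weightedL2Norm π f ^ 2)) := by
  simp only [weightedL2Norm_sq hπ]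
  exact hf.hasSum.congr fun s =>
    (hasSum_comp_indicator (φ := fun x t => t ^ 2 * π x) (by simp) f s).tsum_eq.symm

end Kernels

section Decay

theorem rpow_neg_add_le_of_add_mul_rpow_le {a b k p : ℝ} (hp : 0 < p)
    (hb : 0 < b) (hab : b ≤ a) (h : b + k * a ^ (1 + p) ≤ a) : a ^ (-p) + p * k ≤ b ^ (-p) := by
  have ha : 0 < a := hb.trans_le hab
  set t := k * a ^ p with ht
  have hle : b ≤ a * Real.exp (-t) := by
    rw [Real.rpow_add ha, Real.rpow_one] at h
    nlinarith [Real.add_one_le_exp (-t)]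
  calc a ^ (-p) + p * k = a ^ (-p) * (p * t + 1) := by
        have : a ^ (-p) * a ^ p = 1 := by rw [← Real.rpow_add ha]; simp
        linear_combination (-p * k) * this
    _ ≤ a ^ (-p) * Real.exp (p * t) := by gcongr; exact Real.add_one_le_exp _
    _ = (a * Real.exp (-t)) ^ (-p) := by
        rw [Real.mul_rpow ha.le (Real.exp_pos _).le, ← Real.exp_mul]
        ring_nf
    _ ≤ b ^ (-p) := Real.rpow_le_rpow_of_nonpos hb hle (neg_nonpos.2 hp.le)

theorem le_rpow_neg_inv_of_add_mul_rpow_le {a : ℕ → ℝ} {k p : ℝ} (hp : 0 < p) (hk : 0 < k)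
    (ha : ∀ n, 0 ≤ a n) (hrec : ∀ n, a (n + 1) + k * a n ^ (1 + p) ≤ a n) {n : ℕ}
    (hn : 1 ≤ n) : a n ≤ (p * k * n) ^ (-p⁻¹) := by
  have hanti : ∀ n, a (n + 1) ≤ a n := fun n =>
    (le_add_of_nonneg_right (mul_nonneg hk.le (Real.rpow_nonneg (ha n) _))).trans (hrec n)
  have hgrowth : ∀ n, 0 < a n → p * k * n ≤ a n ^ (-p) := fun n => by
    induction n with
    | zero => exact fun h => by simpa using Real.rpow_nonneg h.le _
    | succ n ih =>
      intro h
      have hstep := rpow_neg_add_le_of_add_mul_rpow_le hp h (hanti n) (hrec n)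
      push_cast
      linarith [ih (h.trans_le (hanti n))]
  have hn0 : (0 : ℝ) < n := by exact_mod_cast hn
  rcases (ha n).eq_or_lt with h | h
  · rw [← h]
    positivity
  · rw [neg_inv, Real.le_rpow_inv_iff_of_neg h (mul_pos (mul_pos hp hk) hn0) (neg_neg_of_pos hp)]
    exact hgrowth n h

end Decay

section Nash

variable {α : Type*} {π : α → ℝ} {Q : α → α → ℝ} {f : α → ℝ} {D κ M : ℝ}

theorem NashInequality.sq_weightedL2Norm_kernelApply_add_le_of_finite_support (hD : 0 < D)
    (hκ : 0 ≤ κ) (hnash : NashInequality π (kernelComp (kernelAdjoint π Q) Q) D κ)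
    (hQ : ∀ x y, 0 ≤ Q x y) (hQ1 : ∀ x, HasSum (Q x) 1) (hπ : ∀ x, 0 < π x)
    (hinv : IsInvariantMeasure π Q) (hf : (Function.support f).Finite)
    (hM : weightedL1Norm π f ≤ M) :
    weightedL2Norm π (kernelApply Q f) ^ 2
        + κ * M ^ (-4 / D) * (weightedL2Norm π f ^ 2) ^ (1 + 2 / D)
      ≤ weightedL2Norm π f ^ 2 := by
  obtain ⟨hL1, hL2⟩ := summable_abs_mul_and_sq_mul_of_finite_support hf π
  rcases eq_or_ne f 0 with rfl | hf0
  · have hexp : 1 + 2 / D ≠ 0 := by positivity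
    simp [weightedL2Norm, kernelApply, Real.zero_rpow hexp]
  have henergy := (summable_kernelApply_sq_and_dirichletForm_eq hQ hQ1 hπ hinv hL2).2
  rw [← weightedL2Norm_sq hπ, ← weightedL2Norm_sq hπ] at henergy
  have hpow : weightedL2Norm π f ^ (2 + 4 / D) = (weightedL2Norm π f ^ 2) ^ (1 + 2 / D) := by
    rw [← Real.rpow_natCast, ← Real.rpow_mul (show 0 ≤ weightedL2Norm π f from
      Real.sqrt_nonneg _)]
    congr 1
    push_cast
    ring
  have hmono : M ^ (-4 / D) ≤ weightedL1Norm π f ^ (-4 / D) :=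
    Real.rpow_le_rpow_of_nonpos (weightedL1Norm_pos hπ hL1 hf0) hM
      (div_nonpos_of_nonpos_of_nonneg (by norm_num) hD.le)
  have hκM : κ * M ^ (-4 / D) * (weightedL2Norm π f ^ 2) ^ (1 + 2 / D) ≤
      dirichletForm π (kernelComp (kernelAdjoint π Q) Q) f :=
    calc _ ≤ κ * weightedL1Norm π f ^ (-4 / D) * (weightedL2Norm π f ^ 2) ^ (1 + 2 / D) := by
          gcongr
      _ = κ * weightedL2Norm π f ^ (2 + 4 / D) * weightedL1Norm π f ^ (-4 / D) := by
          rw [hpow]; ring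
      _ ≤ _ := hnash f hf
  linarith

theorem NashInequality.sq_weightedL2Norm_kernelApply_add_le (hD : 0 < D) (hκ : 0 ≤ κ)
    (hnash : NashInequality π (kernelComp (kernelAdjoint π Q) Q) D κ)
    (hQ : ∀ x y, 0 ≤ Q x y) (hQ1 : ∀ x, HasSum (Q x) 1) (hπ : ∀ x, 0 < π x)
    (hinv : IsInvariantMeasure π Q) (hL1 : Summable fun x => |f x| * π x)
    (hL2 : Summable fun x => f x ^ 2 * π x) (hM : weightedL1Norm π f ≤ M) :
    weightedL2Norm π (kernelApply Q f) ^ 2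
        + κ * M ^ (-4 / D) * (weightedL2Norm π f ^ 2) ^ (1 + 2 / D)
      ≤ weightedL2Norm π f ^ 2 := by
  have hfin : ∀ s : Finset α, (Function.support ((s : Set α).indicator f)).Finite := fun s =>
    s.finite_toSet.subset Set.support_indicator_subset
  have htrunc := tendsto_sq_weightedL2Norm_indicator hπ hL2
  rw [← le_sub_iff_add_le, weightedL2Norm_sq hπ (kernelApply Q f)]
  refine (summable_and_tsum_le_of_tendsto
    (u := fun (s : Finset α) x => kernelApply Q ((s : Set α).indicator f) x ^ 2 * π x)
    (fun s x => mul_nonneg (sq_nonneg _) (hπ x).le) (fun s => ?_) (fun s => ?_) (fun x => ?_)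
    (htrunc.sub ((htrunc.rpow_const (Or.inr (by positivity))).const_mul _))).2
  · exact (summable_kernelApply_sq_and_dirichletForm_eq hQ hQ1 hπ hinv
      (hasSum_comp_indicator (φ := fun x t => t ^ 2 * π x) (by simp) f s).summable).1
  · rw [← weightedL2Norm_sq hπ, le_sub_iff_add_le]
    exact hnash.sq_weightedL2Norm_kernelApply_add_le_of_finite_support hD hκ hQ hQ1 hπ hinv
      (hfin s) ((weightedL1Norm_indicator_le hπ hL1 s).trans hM)
  · exact ((tendsto_kernelApply_indicator (hinv.summable_kernel_mul hQ hπ hL1 x)).pow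
      2).mul_const _

theorem summable_and_weightedL1Norm_iterate_kernelApply_le (hQ : ∀ x y, 0 ≤ Q x y)
    (hQ1 : ∀ x, HasSum (Q x) 1) (hπ : ∀ x, 0 < π x) (hinv : IsInvariantMeasure π Q)
    (hL1 : Summable fun x => |f x| * π x) (hL2 : Summable fun x => f x ^ 2 * π x) (n : ℕ) :
    (Summable fun x => |(kernelApply Q)^[n] f x| * π x) ∧
      (Summable fun x => (kernelApply Q)^[n] f x ^ 2 * π x) ∧
      weightedL1Norm π ((kernelApply Q)^[n] f) ≤ weightedL1Norm π f := by
  induction n with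
  | zero => exact ⟨hL1, hL2, le_rfl⟩
  | succ n ih =>
    obtain ⟨hn1, hn2, hnf⟩ := ih
    rw [Function.iterate_succ_apply']
    have hcontr := hinv.summable_abs_kernelApply_and_weightedL1Norm_le hQ hπ hn1
    exact ⟨hcontr.1, (summable_kernelApply_sq_and_dirichletForm_eq hQ hQ1 hπ hinv hn2).1,
      hcontr.2.trans hnf⟩

theorem nash_decay_rate_eq (hD : 0 < D) (hκ : 0 ≤ κ) (hM : 0 ≤ M) (n : ℕ) :
    (2 / D * (κ * M ^ (-4 / D)) * n) ^ (-(2 / D)⁻¹) =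
      (2 / D * κ) ^ (-D / 2) * (n : ℝ) ^ (-D / 2) * M ^ 2 := by
  have hMpow : (M ^ (-4 / D)) ^ (-D / 2) = M ^ 2 := by
    rw [← Real.rpow_mul hM, ← Real.rpow_natCast]
    congr 1
    field_simp
    norm_num
  rw [inv_div, ← neg_div, ← mul_assoc, Real.mul_rpow (by positivity) (by positivity),
    Real.mul_rpow (by positivity) (by positivity), hMpow]
  ring

theorem l1_l2_decay_from_nash_general (hD : 0 < D) (hκ : 0 < κ)
    (hnash : NashInequality π (kernelComp (kernelAdjoint π Q) Q) D κ)
    (hQ : ∀ x y, 0 ≤ Q x y) (hQ1 : ∀ x, HasSum (Q x) 1) (hπ : ∀ x, 0 < π x)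
    (hinv : IsInvariantMeasure π Q) (hL1 : Summable fun x => |f x| * π x)
    (hL2 : Summable fun x => f x ^ 2 * π x) {n : ℕ} (hn : 1 ≤ n) :
    weightedL2Norm π ((kernelApply Q)^[n] f) ^ 2
      ≤ (2 / D * κ) ^ (-D / 2) * (n : ℝ) ^ (-D / 2) * weightedL1Norm π f ^ 2 := by
  rcases eq_or_ne f 0 with rfl | hf0
  · have hfix : kernelApply Q 0 = 0 := by
      funext x
      simp [kernelApply]
    simp [Function.iterate_fixed hfix, weightedL2Norm, weightedL1Norm]
  have hpos := weightedL1Norm_pos hπ hL1 hf0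
  rw [← nash_decay_rate_eq hD hκ.le hpos.le]
  refine le_rpow_neg_inv_of_add_mul_rpow_le
    (a := fun m => weightedL2Norm π ((kernelApply Q)^[m] f) ^ 2) (by positivity) (by positivity)
    (fun m => sq_nonneg _) (fun m => ?_) hn
  obtain ⟨hm1, hm2, hmf⟩ :=
    summable_and_weightedL1Norm_iterate_kernelApply_le hQ hQ1 hπ hinv hL1 hL2 m
  simp only [Function.iterate_succ_apply']
  exact hnash.sq_weightedL2Norm_kernelApply_add_le hD hκ.le hQ hQ1 hπ hinv hm1 hm2 hmf

end Nash

section IntegerLattice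

variable {d : ℕ} {Q : Zd d → Zd d → ℝ} {π f : Zd d → ℝ}

theorem kerpow_nonneg (hQ : ∀ x y, 0 ≤ Q x y) (n : ℕ) (x y : Zd d) : 0 ≤ kerpow Q n x y := by
  induction n generalizing x y with
  | zero => exact ite_nonneg zero_le_one le_rfl
  | succ n ih => exact tsum_nonneg fun z => mul_nonneg (ih x z) (hQ z y)

theorem IsInvariantMeasure.kerpow (hinv : IsInvariantMeasure π Q) (hQ : ∀ x y, 0 ≤ Q x y)
    (hπ : ∀ x, 0 < π x) (n : ℕ) : IsInvariantMeasure π (kerpow Q n) := by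
  induction n with
  | zero =>
    intro y
    refine (hasSum_ite_eq y (π y)).congr_fun fun x => ?_
    rcases eq_or_ne x y with rfl | hxy <;> simp [_root_.kerpow, *]
  | succ n ih => exact ih.comp hinv (kerpow_nonneg hQ n) hQ hπ

theorem kerApply_kerpow (hinv : IsInvariantMeasure π Q) (hQ : ∀ x y, 0 ≤ Q x y)
    (hπ : ∀ x, 0 < π x) (hf : Summable fun x => |f x| * π x) (n : ℕ) :
    kerApply (kerpow Q n) f = (kernelApply Q)^[n] f := by
  induction n generalizing f with
  | zero =>
    funext x
    simp [kerApply, kerpow]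
  | succ n ih =>
    rw [Function.iterate_succ_apply,
      ← ih (hinv.summable_abs_kernelApply_and_weightedL1Norm_le hQ hπ hf).1]
    exact (hinv.kerpow hQ hπ n).kernelApply_kernelComp hinv (kerpow_nonneg hQ n) hQ hπ hf

end IntegerLattice

theorem l1_l2_decay_from_nash
    (d : ℕ) (hd : 0 < d) (c C κ : ℝ)
    (hc : 0 < c) (hcC : c ≤ C) (hκ : 0 < κ) :
    ∃ C₀ : ℝ, 0 < C₀ ∧
      ∀ (Q : Zd d → Zd d → ℝ) (π : Zd d → ℝ),
        (∀ x y, 0 ≤ Q x y) →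
        (∀ x, HasSum (fun y => Q x y) 1) →
        (∀ x, 0 < π x) →
        (∀ y, HasSum (fun x => π x * Q x y) (π y)) →
        (∀ x, c ≤ π x ∧ π x ≤ C) →
        (∀ f : Zd d → ℝ, (Function.support f).Finite →
          κ * l2norm π f ^ ((2 : ℝ) + 4 / (d : ℝ)) * l1norm π f ^ (-(4 : ℝ) / (d : ℝ))
            ≤ dirichlet π (compK (adjK π Q) Q) f) →
        ∀ n : ℕ, 1 ≤ n → ∀ f : Zd d → ℝ, (Function.support f).Finite →
          l2norm π (kerApply (kerpow Q n) f) ^ 2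
            ≤ C₀ * (n : ℝ) ^ (-(d : ℝ) / 2) * l1norm π f ^ 2 := by
  have hD : (0 : ℝ) < d := by exact_mod_cast hd
  refine ⟨(2 / d * κ) ^ (-(d : ℝ) / 2), by positivity,
    fun Q π hQ hQ1 hπ hinv _ hnash n hn f hf => ?_⟩
  obtain ⟨hL1, hL2⟩ := summable_abs_mul_and_sq_mul_of_finite_support hf π
  rw [kerApply_kerpow hinv hQ hπ hL1]
  exact l1_l2_decay_from_nash_general hD hκ hnash hQ hQ1 hπ hinv hL1 hL2 hn

end
end

section
/- Suppose Q is a transition kernel on ℤ^d satisfying Assumption A.1 with constants (K,δ), and π : ℤ^d → (0,∞) is reversible for Q, i.e. π(x)Q(x,y) = π(y)Q(y,x) for all x,y, with c ≤ π(x) ≤ C for all x (0 < c ≤ C < ∞). Then there exist constants κ > 0 and κ' > 0, depending only on d, c, C, K and δ, such that (i) for every finite set A ⊂ ℤ^d, (π(A))^{1−1/d} ≤ κ · a(∂A), where π(A) := Σ_{x∈A} π(x), a(x,y) := π(x)Q(x,y), and a(∂A) := Σ_{x∈A} Σ_{y∉A} a(x,y); and (ii) for every f ∈ ℓ₀(ℤ^d),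 𝓔_Q(f,f) ≥ κ' ‖f‖_{L²(π)}^{2+4/d} ‖f‖_{L¹(π)}^{−4/d}. -/
open scoped Classical

noncomputable section

/-- Maximum norm on `ℤ^d`, as a natural number. -/
def maxNorm {d : ℕ} (v : Zd d) : ℕ := Finset.univ.sup fun i => (v i).natAbs

/-- Assumption A.1 with constants `(K, δ)`. -/
def AssumptionA1 {d : ℕ} (Q : Zd d → Zd d → ℝ) (K : ℕ) (δ : ℝ) : Prop :=
  ∀ x y : Zd d, maxNorm (y - x) ≤ 3 * K + 1 →
    ∃ y' : Zd d, maxNorm (y' - y) ≤ K ∧ δ ≤ Q x y'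

/-!
Averaging `‖F (· + z) - F‖₂²` over the translations `z` in a cube `B` gives at least
`2 ‖F‖₂² - 2 ‖F‖₁² / |B|`. Hence, as soon as `|B|` exceeds `2 ‖F‖₁² / ‖F‖₂²`, some `z ∈ B` displaces
`F` by at least its own `ℓ²` norm. On the other hand `z` is a sum of at most `d · r` unit steps,
where `r` is the side of the cube, so the displacement in `ℓᵖ` is at most `d · r` times that of a
single step. For `p = 1` and `F` an indicator, comparing the two bounds is the isoperimetric
inequality of the lattice; for `p = 2` it is the Nash inequality.

To reach the kernel `Q`, replace `f` by its maxima over the boxes of side `2K + 1` that tile `ℤ^d`.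
Assumption A.1 provides, from the maximiser in any box, an edge of weight at least `δ` into each
neighbouring box, so the gradient of the coarse-grained function is controlled by the Dirichlet
form of `f`, while its `ℓ¹` and `ℓ²` norms are comparable to those of `f`.
-/

open scoped fwdDiff

section Summation

variable {α : Type*} {f : α → ℝ}

lemma summable_abs_rpow_of_summable (hf : Summable f) {p : ℝ} (hp : 1 ≤ p) :
    Summable fun x => |f x| ^ p := by
  refine Summable.of_norm_bounded_eventually hf.abs ?_
  filter_upwards [hf.abs.tendsto_cofinite_zero.eventually_le_const one_pos] with x hx
  rw [Real.norm_of_nonneg (by positivity)]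
  exact Real.rpow_le_self_of_le_one (abs_nonneg _) hx hp

lemma summable_sq_of_summable (hf : Summable f) :
    Summable fun x => f x ^ 2 := by
  simpa only [Real.rpow_two, sq_abs] using summable_abs_rpow_of_summable hf one_le_two

lemma hasSum_indicator_one (S : Finset α) :
    HasSum ((S : Set α).indicator (1 : α → ℝ)) S.card := by
  simpa [Set.indicator_apply] using
    hasSum_sum_of_ne_finset_zero (f := (S : Set α).indicator (1 : α → ℝ)) (s := S)
      fun x hx => by simpa using hx

lemma summable_comp_and_tsum_comp_le {β : Type*} [DecidableEq β] {φ : α → β} {N : ℕ}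
    (hφ : ∀ (s : Finset α) (b : β), (s.filter fun a => φ a = b).card ≤ N)
    {g : β → ℝ} (hg : ∀ b, 0 ≤ g b) (hsum : Summable g) :
    (Summable fun a => g (φ a)) ∧ ∑' a, g (φ a) ≤ N * ∑' b, g b := by
  have hpartial : ∀ s : Finset α, ∑ a ∈ s, g (φ a) ≤ N * ∑' b, g b := fun s =>
    calc ∑ a ∈ s, g (φ a)
        = ∑ b ∈ s.image φ, (s.filter fun a => φ a = b).card • g b := Finset.sum_comp g φ
      _ ≤ ∑ b ∈ s.image φ, N * g b := by
          refine Finset.sum_le_sum fun b _ => ?_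
          rw [nsmul_eq_mul]
          exact mul_le_mul_of_nonneg_right (by exact_mod_cast hφ s b) (hg b)
      _ ≤ N * ∑' b, g b := by
          rw [← Finset.mul_sum]
          gcongr
          exact hsum.sum_le_tsum _ fun b _ => hg b
  exact ⟨summable_of_sum_le (fun a => hg (φ a)) hpartial,
    Real.tsum_le_of_sum_le (fun a => hg (φ a)) hpartial⟩

lemma tsum_mul_mem_Icc {g w : α → ℝ} {c C : ℝ} (hg : ∀ x, 0 ≤ g x) (hsum : Summable g)
    (hc : 0 ≤ c) (hw : ∀ x, w x ∈ Set.Icc c C) :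
    ∑' x, g x * w x ∈ Set.Icc (c * ∑' x, g x) (C * ∑' x, g x) := by
  have hupper : ∀ x, g x * w x ≤ g x * C := fun x => mul_le_mul_of_nonneg_left (hw x).2 (hg x)
  have hsum' : Summable fun x => g x * w x :=
    (hsum.mul_right C).of_nonneg_of_le (fun x => mul_nonneg (hg x) (hc.trans (hw x).1)) hupper
  rw [mul_comm c, mul_comm C, ← tsum_mul_right, ← tsum_mul_right]
  exact ⟨(hsum.mul_right c).tsum_le_tsum
    (fun x => mul_le_mul_of_nonneg_left (hw x).1 (hg x)) hsum',
    hsum'.tsum_le_tsum hupper (hsum.mul_right C)⟩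

end Summation

section Translation

variable {G : Type*} [AddCommGroup G] {F : G → ℝ} {p : ℝ}

lemma summable_fwdDiff (hF : Summable F) (v : G) : Summable (Δ_[v] F) :=
  ((Equiv.addRight v).summable_iff.mpr hF).sub hF

/-- The `ℓᵖ` modulus of continuity of `F`: the `ℓᵖ` norm of `F (· + v) - F` as a function of the
translation vector `v`. -/
def lpModulus (p : ℝ) (F : G → ℝ) (v : G) : ℝ :=
  (∑' x, |Δ_[v] F x| ^ p) ^ (1 / p)

lemma lpModulus_nonneg (p : ℝ) (F : G → ℝ) (v : G) : 0 ≤ lpModulus p F v :=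
  Real.rpow_nonneg (tsum_nonneg fun _ => by positivity) _

lemma lpModulus_rpow (hp : p ≠ 0) (F : G → ℝ) (v : G) :
    lpModulus p F v ^ p = ∑' x, |Δ_[v] F x| ^ p := by
  rw [lpModulus, one_div, Real.rpow_inv_rpow (tsum_nonneg fun _ => by positivity) hp]

lemma lpModulus_zero (hp : p ≠ 0) (F : G → ℝ) : lpModulus p F 0 = 0 := by
  simp [lpModulus, fwdDiff, Real.zero_rpow hp, Real.zero_rpow (inv_ne_zero hp)]

lemma lpModulus_neg (p : ℝ) (F : G → ℝ) (v : G) : lpModulus p F (-v) = lpModulus p F v := by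
  rw [lpModulus, lpModulus, ← (Equiv.addRight v).tsum_eq fun x => |Δ_[-v] F x| ^ p]
  simp [fwdDiff, abs_sub_comm]

lemma lpModulus_add_le (hF : Summable F) (hp : 1 ≤ p) (v w : G) :
    lpModulus p F (v + w) ≤ lpModulus p F v + lpModulus p F w := by
  have hsummable : ∀ u, Summable fun x => |Δ_[u] F x| ^ p := fun u =>
    summable_abs_rpow_of_summable (summable_fwdDiff hF u) hp
  have hshift : ∑' x, |Δ_[w] F (x + v)| ^ p = ∑' x, |Δ_[w] F x| ^ p :=
    (Equiv.addRight v).tsum_eq fun x => |Δ_[w] F x| ^ p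
  have hcocycle : ∀ x, Δ_[v + w] F x = Δ_[v] F x + Δ_[w] F (x + v) := fun x => by
    simp only [fwdDiff, add_assoc]
    ring
  obtain ⟨hsum, hminkowski⟩ := Real.Lp_add_le_tsum_of_nonneg hp
    (fun x => abs_nonneg (Δ_[v] F x)) (fun x => abs_nonneg (Δ_[w] F (x + v)))
    (hsummable v) ((Equiv.addRight v).summable_iff.mpr (hsummable w))
  rw [hshift] at hminkowski
  refine le_trans (Real.rpow_le_rpow (tsum_nonneg fun _ => by positivity) ?_ (by positivity))
    hminkowski
  refine (hsummable _).tsum_le_tsum (fun x => ?_) hsum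
  rw [hcocycle]
  gcongr
  exact abs_add_le _ _

lemma lpModulus_sum_le (hF : Summable F) (hp : 1 ≤ p) {ι : Type*} (s : Finset ι) (v : ι → G) :
    lpModulus p F (∑ i ∈ s, v i) ≤ ∑ i ∈ s, lpModulus p F (v i) :=
  s.le_sum_of_subadditive _ (lpModulus_zero (by positivity) F).le (lpModulus_add_le hF hp) v

lemma lpModulus_nsmul_le (hF : Summable F) (hp : 1 ≤ p) (n : ℕ) (v : G) :
    lpModulus p F (n • v) ≤ n * lpModulus p F v := by
  simpa using lpModulus_sum_le hF hp (Finset.range n) fun _ => v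

lemma lpModulus_zsmul_le (hF : Summable F) (hp : 1 ≤ p) (n : ℤ) (v : G) :
    lpModulus p F (n • v) ≤ |(n : ℝ)| * lpModulus p F v := by
  obtain ⟨m, rfl | rfl⟩ := n.eq_nat_or_neg
  · simpa using lpModulus_nsmul_le hF hp m v
  · simpa [lpModulus_neg] using lpModulus_nsmul_le hF hp m v

lemma summable_mul_translate (hF : Summable F) (v : G) : Summable fun x => F x * F (x + v) := by
  refine Summable.of_norm_bounded (hF.abs.mul_right (∑' y, |F y|)) fun x => ?_
  rw [Real.norm_eq_abs, abs_mul]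
  gcongr
  exact hF.abs.le_tsum (x + v) fun y _ => abs_nonneg (F y)

lemma tsum_fwdDiff_sq (hF : Summable F) (v : G) :
    ∑' x, Δ_[v] F x ^ 2 = 2 * ∑' x, F x ^ 2 - 2 * ∑' x, F x * F (x + v) := by
  have hsq := summable_sq_of_summable hF
  have hsq_shift : Summable fun x => F (x + v) ^ 2 :=
    hsq.comp_injective (add_left_injective v)
  have hshift : ∑' x, F (x + v) ^ 2 = ∑' x, F x ^ 2 :=
    (Equiv.addRight v).tsum_eq fun x => F x ^ 2
  calc ∑' x, Δ_[v] F x ^ 2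
      = ∑' x, (F (x + v) ^ 2 + F x ^ 2 - 2 * (F x * F (x + v))) :=
        tsum_congr fun x => by simp only [fwdDiff]; ring
    _ = 2 * ∑' x, F x ^ 2 - 2 * ∑' x, F x * F (x + v) := by
        rw [(hsq_shift.add hsq).tsum_sub ((summable_mul_translate hF v).mul_left 2),
          hsq_shift.tsum_add hsq, tsum_mul_left, hshift]
        ring

lemma sum_tsum_mul_translate_le (hF : Summable F) (B : Finset G) :
    ∑ v ∈ B, ∑' x, F x * F (x + v) ≤ (∑' x, |F x|) ^ 2 := by
  have hB : ∀ x, |∑ v ∈ B, F (x + v)| ≤ ∑' y, |F y| := fun x =>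
    calc |∑ v ∈ B, F (x + v)| ≤ ∑ v ∈ B, |F (x + v)| := Finset.abs_sum_le_sum_abs _ _
      _ ≤ ∑' v, |F (x + v)| := ((Equiv.addLeft x).summable_iff.mpr hF.abs).sum_le_tsum _
          fun v _ => abs_nonneg (F (x + v))
      _ = ∑' y, |F y| := (Equiv.addLeft x).tsum_eq fun y => |F y|
  rw [← Summable.tsum_finsetSum fun v _ => summable_mul_translate hF v, sq, ← tsum_mul_right]
  refine Summable.tsum_le_tsum (fun x => ?_)
    (summable_sum fun v _ => summable_mul_translate hF v) (hF.abs.mul_right _)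
  rw [← Finset.mul_sum]
  refine (le_abs_self _).trans ?_
  rw [abs_mul]
  gcongr
  exact hB x

-- The squared displacements over `B` have mean at least `2 ‖F‖₂² - 2 ‖F‖₁² / #B`.
lemma exists_mem_tsum_sq_le_tsum_fwdDiff_sq (hF : Summable F) {B : Finset G} (hB : B.Nonempty)
    (hcard : 2 * (∑' x, |F x|) ^ 2 ≤ B.card * ∑' x, F x ^ 2) :
    ∃ v ∈ B, ∑' x, F x ^ 2 ≤ ∑' x, Δ_[v] F x ^ 2 := by
  refine Finset.exists_le_of_sum_le hB ?_
  simp only [tsum_fwdDiff_sq hF, Finset.sum_sub_distrib, Finset.sum_const, nsmul_eq_mul,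
    ← Finset.mul_sum]
  linarith [sum_tsum_mul_translate_le hF B]

end Translation

section Lattice

variable {d : ℕ} {F : Zd d → ℝ}

lemma tsum_abs_fwdDiff_rpow_le (hF : Summable F) {p g r : ℝ} (hp : 1 ≤ p) (hg : 0 ≤ g)
    (hunit : ∀ i, ∑' x, |Δ_[Pi.single i 1] F x| ^ p ≤ g ^ p)
    {z : Zd d} (hz : ∀ i, |(z i : ℝ)| ≤ r) :
    ∑' x, |Δ_[z] F x| ^ p ≤ (d * r * g) ^ p := by
  have hp0 : 0 < p := by linarith
  have hunit' : ∀ i, lpModulus p F (Pi.single i 1) ≤ g := fun i => by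
    rw [← Real.rpow_le_rpow_iff (lpModulus_nonneg _ _ _) hg hp0, lpModulus_rpow hp0.ne']
    exact hunit i
  rw [← lpModulus_rpow hp0.ne']
  refine Real.rpow_le_rpow (lpModulus_nonneg _ _ _) ?_ hp0.le
  calc lpModulus p F z = lpModulus p F (∑ i, z i • Pi.single i 1) := by
        rw [← pi_eq_sum_univ' z]
    _ ≤ ∑ i, lpModulus p F (z i • Pi.single i 1) := lpModulus_sum_le hF hp _ _
    _ ≤ ∑ _i : Fin d, r * g := Finset.sum_le_sum fun i _ =>
        (lpModulus_zsmul_le hF hp _ _).trans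
          (mul_le_mul (hz i) (hunit' i) (lpModulus_nonneg _ _ _) ((abs_nonneg _).trans (hz i)))
    _ = d * r * g := by simp [mul_assoc]

lemma le_floor_rpow_add_one_pow (hd : 0 < d) {t : ℝ} (ht : 0 ≤ t) :
    t ≤ ((⌊t ^ (1 / (d : ℝ))⌋₊ : ℝ) + 1) ^ d :=
  calc t = (t ^ (1 / (d : ℝ))) ^ d := by rw [one_div, Real.rpow_inv_natCast_pow ht hd.ne']
    _ ≤ _ := pow_le_pow_left₀ (by positivity) (Nat.lt_floor_add_one _).le d

-- Average over the cube `[0, R]^d` whose side makes its volume exceed `2 ‖F‖₁² / ‖F‖₂²`.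
lemma exists_abs_le_rpow_and_tsum_sq_le_tsum_fwdDiff_sq (hd : 0 < d) (hF : Summable F) :
    ∃ z : Zd d, (∀ i, |(z i : ℝ)| ≤ (2 * (∑' x, |F x|) ^ 2 / ∑' x, F x ^ 2) ^ (1 / (d : ℝ))) ∧
      ∑' x, F x ^ 2 ≤ ∑' x, Δ_[z] F x ^ 2 := by
  have hu : 0 ≤ ∑' x, F x ^ 2 := tsum_nonneg fun _ => sq_nonneg _
  set t := 2 * (∑' x, |F x|) ^ 2 / ∑' x, F x ^ 2
  have ht0 : 0 ≤ t := by positivity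
  rcases hu.eq_or_lt with hzero | hpos
  · exact ⟨0, fun i => by simpa using Real.rpow_nonneg ht0 _,
      hzero ▸ tsum_nonneg fun _ => sq_nonneg _⟩
  set R := ⌊t ^ (1 / (d : ℝ))⌋₊
  set cube : Finset (Zd d) := Finset.Icc 0 fun _ => (R : ℤ)
  have hcard : (cube.card : ℝ) = (R + 1) ^ d := by
    simp [cube, Pi.card_Icc]
  obtain ⟨z, hz, hle⟩ := exists_mem_tsum_sq_le_tsum_fwdDiff_sq hF (B := cube)
    (Finset.nonempty_Icc.mpr fun _ => by simp) (by
      rw [hcard, ← div_le_iff₀ hpos]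
      exact le_floor_rpow_add_one_pow hd ht0)
  refine ⟨z, fun i => ?_, hle⟩
  obtain ⟨h₀, h₁⟩ := Finset.mem_Icc.mp hz
  rw [abs_of_nonneg (by exact_mod_cast h₀ i)]
  calc (z i : ℝ) ≤ R := by exact_mod_cast h₁ i
    _ ≤ _ := Nat.floor_le (by positivity)

lemma tsum_sq_le_mul_rpow_mul (hd : 0 < d) (hF : Summable F) {E : ℝ}
    (hE : ∀ i, ∑' x, Δ_[Pi.single i 1] F x ^ 2 ≤ E) :
    ∑' x, F x ^ 2 ≤
      d ^ 2 * (2 * (∑' x, |F x|) ^ 2 / ∑' x, F x ^ 2) ^ (2 / (d : ℝ)) * E := by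
  have hE0 : 0 ≤ E := (tsum_nonneg fun _ => sq_nonneg _).trans (hE ⟨0, hd⟩)
  obtain ⟨z, hz, hle⟩ := exists_abs_le_rpow_and_tsum_sq_le_tsum_fwdDiff_sq hd hF
  have hratio : 0 ≤ 2 * (∑' x, |F x|) ^ 2 / ∑' x, F x ^ 2 :=
    div_nonneg (by positivity) (tsum_nonneg fun _ => sq_nonneg _)
  set t := 2 * (∑' x, |F x|) ^ 2 / ∑' x, F x ^ 2
  have hdisp : ∑' x, Δ_[z] F x ^ 2 ≤ (d * t ^ (1 / (d : ℝ)) * √E) ^ 2 := by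
    simpa only [Real.rpow_two, sq_abs] using tsum_abs_fwdDiff_rpow_le hF one_le_two
      (Real.sqrt_nonneg E)
      (fun i => by simpa only [Real.rpow_two, sq_abs, Real.sq_sqrt hE0] using hE i) hz
  calc ∑' x, F x ^ 2 ≤ (d * t ^ (1 / (d : ℝ)) * √E) ^ 2 := hle.trans hdisp
    _ = d ^ 2 * t ^ (2 / (d : ℝ)) * E := by
        rw [mul_pow, mul_pow, Real.sq_sqrt hE0, ← Real.rpow_mul_natCast hratio, Nat.cast_ofNat,
          one_div_mul_eq_div]

lemma lattice_nash (hd : 0 < d) (hF : Summable F) {E : ℝ}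
    (hE : ∀ i, ∑' x, Δ_[Pi.single i 1] F x ^ 2 ≤ E) :
    (∑' x, F x ^ 2) ^ (1 + 2 / (d : ℝ)) ≤ 4 * d ^ 2 * E * (∑' x, |F x|) ^ (4 / (d : ℝ)) := by
  have hE0 : 0 ≤ E := (tsum_nonneg fun _ => sq_nonneg _).trans (hE ⟨0, hd⟩)
  have hle := tsum_sq_le_mul_rpow_mul hd hF hE
  have hv : 0 ≤ ∑' x, |F x| := tsum_nonneg fun _ => abs_nonneg _
  have hu : 0 ≤ ∑' x, F x ^ 2 := tsum_nonneg fun _ => sq_nonneg _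
  set u := ∑' x, F x ^ 2
  set v := ∑' x, |F x|
  rcases hu.eq_or_lt with hzero | hpos
  · rw [← hzero, Real.zero_rpow (by positivity)]
    positivity
  have hvpow : (v ^ 2) ^ (2 / (d : ℝ)) = v ^ (4 / (d : ℝ)) := by
    rw [← Real.rpow_natCast_mul hv]
    ring_nf
  have htwo : (2 : ℝ) ^ (2 / (d : ℝ)) ≤ 4 :=
    calc (2 : ℝ) ^ (2 / (d : ℝ)) ≤ 2 ^ (2 : ℝ) := Real.rpow_le_rpow_of_exponent_le one_le_two
          (div_le_self two_pos.le (by exact_mod_cast hd))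
      _ = 4 := by norm_num
  calc u ^ (1 + 2 / (d : ℝ)) = u * u ^ (2 / (d : ℝ)) := by
        rw [Real.rpow_add hpos, Real.rpow_one]
    _ ≤ d ^ 2 * (2 * v ^ 2 / u) ^ (2 / (d : ℝ)) * E * u ^ (2 / (d : ℝ)) := by gcongr
    _ = d ^ 2 * E * (2 ^ (2 / (d : ℝ)) * v ^ (4 / (d : ℝ))) := by
        rw [Real.div_rpow (by positivity) hu, Real.mul_rpow two_pos.le (by positivity), hvpow]
        field_simp
    _ ≤ d ^ 2 * E * (4 * v ^ (4 / (d : ℝ))) := by gcongr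
    _ = 4 * d ^ 2 * E * v ^ (4 / (d : ℝ)) := by ring

lemma card_le_mul_rpow_mul (hd : 0 < d) (S : Finset (Zd d)) {E : ℝ}
    (hE : ∀ i, ∑' x, Δ_[Pi.single i 1] ((S : Set (Zd d)).indicator 1) x ^ 2 ≤ E) :
    (S.card : ℝ) ≤ d * (2 * S.card) ^ (1 / (d : ℝ)) * E := by
  have hE0 : 0 ≤ E := (tsum_nonneg fun _ => sq_nonneg _).trans (hE ⟨0, hd⟩)
  have hsum : HasSum ((S : Set (Zd d)).indicator 1) (S.card : ℝ) := hasSum_indicator_one S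
  set F : Zd d → ℝ := (S : Set (Zd d)).indicator 1
  have hF01 : ∀ x, F x = 0 ∨ F x = 1 := Set.indicator_eq_zero_or_self (S : Set (Zd d)) 1
  have habs : ∑' x, |F x| = S.card :=
    (tsum_congr fun x => by rcases hF01 x with h | h <;> simp [h]).trans hsum.tsum_eq
  have hsq : ∑' x, F x ^ 2 = S.card :=
    (tsum_congr fun x => by rcases hF01 x with h | h <;> simp [h]).trans hsum.tsum_eq
  have hdiff : ∀ v x, |Δ_[v] F x| ^ (1 : ℝ) = Δ_[v] F x ^ 2 := fun v x => by
    rcases hF01 x with h | h <;> rcases hF01 (x + v) with h' | h' <;> simp [fwdDiff, h, h']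
  have hratio : 2 * (S.card : ℝ) ^ 2 / S.card = 2 * S.card := by
    rw [mul_div_assoc, sq, mul_self_div_self]
  obtain ⟨z, hz, hle⟩ := exists_abs_le_rpow_and_tsum_sq_le_tsum_fwdDiff_sq hd hsum.summable
  rw [habs, hsq, hratio] at hz
  rw [hsq] at hle
  have hdisp := tsum_abs_fwdDiff_rpow_le hsum.summable le_rfl hE0
    (fun i => by simpa only [hdiff, Real.rpow_one] using hE i) hz
  simp only [hdiff, Real.rpow_one] at hdisp
  exact hle.trans hdisp

lemma lattice_isoperimetric (hd : 0 < d) {S : Finset (Zd d)} (hS : S.Nonempty) {E : ℝ}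
    (hE : ∀ i, ∑' x, Δ_[Pi.single i 1] ((S : Set (Zd d)).indicator 1) x ^ 2 ≤ E) :
    (S.card : ℝ) ^ (1 - 1 / (d : ℝ)) ≤ 2 * d * E := by
  have hd1 : (1 : ℝ) ≤ d := by exact_mod_cast hd
  have hE0 : 0 ≤ E := (tsum_nonneg fun _ => sq_nonneg _).trans (hE ⟨0, hd⟩)
  have hn : (0 : ℝ) < S.card := by exact_mod_cast hS.card_pos
  have hradius : (2 * (S.card : ℝ)) ^ (1 / (d : ℝ)) ≤ 2 * (S.card : ℝ) ^ (1 / (d : ℝ)) := by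
    rw [Real.mul_rpow two_pos.le hn.le]
    gcongr
    exact Real.rpow_le_self_of_one_le one_le_two (div_le_one_of_le₀ hd1 (by positivity))
  rw [Real.rpow_sub hn, Real.rpow_one, div_le_iff₀ (by positivity)]
  calc (S.card : ℝ) ≤ d * (2 * S.card) ^ (1 / (d : ℝ)) * E := card_le_mul_rpow_mul hd S hE
    _ ≤ d * (2 * (S.card : ℝ) ^ (1 / (d : ℝ))) * E := by gcongr
    _ = 2 * d * E * (S.card : ℝ) ^ (1 / (d : ℝ)) := by ring

end Lattice

section Boxes

variable {d K : ℕ} {f : Zd d → ℝ} {k x : Zd d}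

lemma maxNorm_le_iff {v : Zd d} {n : ℕ} : maxNorm v ≤ n ↔ ∀ i, |v i| ≤ n := by
  simp only [maxNorm, Finset.sup_le_iff, Finset.mem_univ, true_implies]
  exact forall_congr' fun i => by rw [Int.abs_eq_natAbs, Nat.cast_le]

lemma maxNorm_single_one (i : Fin d) : maxNorm (Pi.single i 1 : Zd d) ≤ 1 :=
  maxNorm_le_iff.mpr fun j => by
    rcases eq_or_ne j i with rfl | hj
    · simp
    · simp [hj]

/-- The box of side `2 * K + 1` centred at `(2 * K + 1) • k`; as `k` varies, these boxes tile
`ℤ^d`. -/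
def box (K : ℕ) (k : Zd d) : Finset (Zd d) :=
  Finset.Icc (fun i => (2 * K + 1) * k i - K) fun i => (2 * K + 1) * k i + K

/-- The index `k` of the box of side `2 * K + 1` that contains `x`. -/
def boxIndex (K : ℕ) (x : Zd d) : Zd d := fun i => (x i + K) / (2 * K + 1)

lemma mem_box_iff_abs_le : x ∈ box K k ↔ ∀ i, |x i - (2 * K + 1) * k i| ≤ K := by
  simp only [box, Finset.mem_Icc, Pi.le_def, ← forall_and]
  refine forall_congr' fun i => ?_
  rw [abs_le]
  constructor <;> rintro ⟨_, _⟩ <;> constructor <;> linarith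

lemma mem_box : x ∈ box K k ↔ boxIndex K x = k := by
  have hpos : (0 : ℤ) < 2 * K + 1 := by positivity
  simp only [box, boxIndex, Finset.mem_Icc, Pi.le_def, ← forall_and, funext_iff]
  refine forall_congr' fun i => ?_
  rw [Int.ediv_eq_iff_of_pos hpos]
  constructor <;> rintro ⟨_, _⟩ <;> constructor <;> linarith

lemma mem_box_boxIndex (K : ℕ) (x : Zd d) : x ∈ box K (boxIndex K x) :=
  mem_box.mpr rfl

lemma card_box (K : ℕ) (k : Zd d) : (box K k).card = (2 * K + 1) ^ d := by
  have hside : ∀ m : ℤ, (Finset.Icc ((2 * K + 1) * m - K) ((2 * K + 1) * m + K)).card = 2 * K + 1 :=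
    fun m => by rw [Int.card_Icc]; omega
  simp [box, Pi.card_Icc, hside]

lemma smul_mem_box (K : ℕ) (k : Zd d) : (2 * K + 1 : ℤ) • k ∈ box K k :=
  mem_box_iff_abs_le.mpr fun i => by simp

lemma box_nonempty (K : ℕ) (k : Zd d) : (box K k).Nonempty :=
  ⟨_, smul_mem_box K k⟩

lemma card_filter_boxIndex_le (s : Finset (Zd d)) (k : Zd d) :
    (s.filter fun x => boxIndex K x = k).card ≤ (2 * K + 1) ^ d := by
  rw [← card_box K k]
  exact Finset.card_le_card fun x hx => mem_box.mpr (Finset.mem_filter.mp hx).2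

/-- The coarse graining of `f`: its value at `k` is the maximum of `|f|` over `box K k`. -/
def boxMax (K : ℕ) (f : Zd d → ℝ) (k : Zd d) : ℝ :=
  (box K k).sup' (box_nonempty K k) fun x => |f x|

lemma abs_le_boxMax (hx : x ∈ box K k) : |f x| ≤ boxMax K f k :=
  Finset.le_sup' (fun x => |f x|) hx

lemma exists_mem_box_boxMax_eq (K : ℕ) (f : Zd d → ℝ) (k : Zd d) :
    ∃ x ∈ box K k, boxMax K f k = |f x| :=
  Finset.exists_mem_eq_sup' _ _

lemma exists_injective_boxMax_eq (K : ℕ) (f : Zd d → ℝ) :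
    ∃ X : Zd d → Zd d, Function.Injective X ∧ ∀ k, boxMax K f k = |f (X k)| := by
  choose X hX hmax using exists_mem_box_boxMax_eq K f
  exact ⟨X, fun k l h => (mem_box.mp (hX k)).symm.trans (h ▸ mem_box.mp (hX l)), hmax⟩

lemma summable_boxMax (K : ℕ) (hf : Summable f) : Summable (boxMax K f) := by
  obtain ⟨X, hX, hmax⟩ := exists_injective_boxMax_eq K f
  exact (hf.abs.comp_injective hX).congr fun k => (hmax k).symm

lemma tsum_abs_boxMax_le (K : ℕ) (hf : Summable f) :
    ∑' k, |boxMax K f k| ≤ ∑' x, |f x| := by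
  obtain ⟨X, hX, hmax⟩ := exists_injective_boxMax_eq K f
  simp only [hmax, abs_abs]
  exact tsum_comp_le_tsum_of_inj hf.abs (fun x => abs_nonneg _) hX

lemma tsum_sq_le_tsum_boxMax_sq (K : ℕ) (hf : Summable f) :
    ∑' x, f x ^ 2 ≤ (2 * K + 1) ^ d * ∑' k, boxMax K f k ^ 2 := by
  have hle : ∀ x, f x ^ 2 ≤ boxMax K f (boxIndex K x) ^ 2 := fun x =>
    sq_le_sq.mpr ((abs_le_boxMax (mem_box_boxIndex K x)).trans (le_abs_self _))
  obtain ⟨hsum, htsum⟩ := summable_comp_and_tsum_comp_le card_filter_boxIndex_le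
    (fun k => sq_nonneg (boxMax K f k)) (summable_sq_of_summable (summable_boxMax K hf))
  push_cast at htsum
  exact ((summable_sq_of_summable hf).tsum_le_tsum hle hsum).trans htsum

lemma boxMax_indicator_one (K : ℕ) (A : Finset (Zd d)) :
    boxMax K ((A : Set (Zd d)).indicator 1) =
      ((A.image (boxIndex K) : Finset (Zd d)) : Set (Zd d)).indicator 1 := by
  ext k
  by_cases hk : k ∈ A.image (boxIndex K)
  · obtain ⟨x, hx, rfl⟩ := Finset.mem_image.mp hk
    rw [Set.indicator_of_mem (Finset.mem_coe.mpr hk)]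
    refine le_antisymm (Finset.sup'_le _ _ fun y _ => ?_) ?_
    · by_cases hy : y ∈ A <;> simp [hy]
    · simpa [hx] using
        abs_le_boxMax (f := (A : Set (Zd d)).indicator 1) (mem_box_boxIndex K x)
  · obtain ⟨x, hx, hmax⟩ := exists_mem_box_boxMax_eq K ((A : Set (Zd d)).indicator 1) k
    have hxA : x ∉ A := fun h => hk (Finset.mem_image.mpr ⟨x, h, mem_box.mp hx⟩)
    rw [hmax, Set.indicator_of_notMem (mt Finset.mem_coe.mp hxA),
      Set.indicator_of_notMem (mt Finset.mem_coe.mp hk), abs_zero]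

end Boxes

section Kernel

variable {d K : ℕ} {Q : Zd d → Zd d → ℝ} {π f : Zd d → ℝ} {c δ : ℝ}

lemma AssumptionA1.exists_mem_box (hA : AssumptionA1 Q K δ) {k l x : Zd d}
    (hkl : maxNorm (l - k) ≤ 1) (hx : x ∈ box K k) : ∃ y ∈ box K l, δ ≤ Q x y := by
  have hdist : maxNorm ((2 * K + 1 : ℤ) • l - x) ≤ 3 * K + 1 := maxNorm_le_iff.mpr fun i => by
    have hxi := abs_le.mp (mem_box_iff_abs_le.mp hx i)
    have hli := abs_le.mp (maxNorm_le_iff.mp hkl i)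
    simp only [Pi.sub_apply, Pi.smul_apply, smul_eq_mul, Nat.cast_one] at hli ⊢
    push_cast
    rw [abs_le]
    constructor <;> nlinarith
  obtain ⟨y, hy, hQ⟩ := hA x _ hdist
  exact ⟨y, mem_box_iff_abs_le.mpr (maxNorm_le_iff.mp hy), hQ⟩

-- The edge joins a maximiser of `|f|` in the box with the larger maximum to the other box.
lemma AssumptionA1.exists_edge_abs_boxMax_sub_le (hA : AssumptionA1 Q K δ) (hc : 0 ≤ c)
    (hδ : 0 ≤ δ) (hπ : ∀ x, c ≤ π x) (hrev : ∀ x y, π x * Q x y = π y * Q y x)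
    (f : Zd d → ℝ) {k l : Zd d} (hkl : maxNorm (l - k) ≤ 1) :
    ∃ x ∈ box K k, ∃ y ∈ box K l,
      c * δ ≤ π x * Q x y ∧ |boxMax K f l - boxMax K f k| ≤ |f y - f x| := by
  wlog h : boxMax K f l ≤ boxMax K f k generalizing k l
  · have hlk : maxNorm (k - l) ≤ 1 :=
      maxNorm_le_iff.mpr fun i => by simpa [abs_sub_comm] using maxNorm_le_iff.mp hkl i
    obtain ⟨x, hx, y, hy, hw, hle⟩ := this hlk (le_of_not_ge h)
    exact ⟨y, hy, x, hx, hrev x y ▸ hw, by rwa [abs_sub_comm, abs_sub_comm (f x)]⟩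
  obtain ⟨x, hx, hmax⟩ := exists_mem_box_boxMax_eq K f k
  obtain ⟨y, hy, hQ⟩ := hA.exists_mem_box hkl hx
  refine ⟨x, hx, y, hy, mul_le_mul (hπ x) hQ hδ (hc.trans (hπ x)), ?_⟩
  rw [abs_sub_comm, abs_of_nonneg (sub_nonneg.mpr h), abs_sub_comm]
  linarith [abs_le_boxMax (f := f) hy, abs_sub_abs_le_abs_sub (f x) (f y)]

lemma dirichlet_summand_nonneg (hQ : ∀ x y, 0 ≤ Q x y) (hπ : ∀ x, 0 ≤ π x) (f : Zd d → ℝ)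
    (p : Zd d × Zd d) : 0 ≤ (f p.2 - f p.1) ^ 2 * π p.1 * Q p.1 p.2 :=
  mul_nonneg (mul_nonneg (sq_nonneg _) (hπ _)) (hQ _ _)

lemma summable_dirichlet (hQ : ∀ x y, 0 ≤ Q x y) (hrow : ∀ x, Summable (Q x))
    (hπ : ∀ x, 0 ≤ π x) (hrev : ∀ x y, π x * Q x y = π y * Q y x)
    (hf : (Function.support f).Finite) :
    Summable fun p : Zd d × Zd d => (f p.2 - f p.1) ^ 2 * π p.1 * Q p.1 p.2 := by
  have hw : ∀ x y, 0 ≤ π x * Q x y := fun x y => mul_nonneg (hπ x) (hQ x y)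
  have hfst : Summable fun p : Zd d × Zd d => f p.1 ^ 2 * (π p.1 * Q p.1 p.2) := by
    rw [summable_prod_of_nonneg fun p => mul_nonneg (sq_nonneg _) (hw _ _)]
    refine ⟨fun x => ((hrow x).mul_left (π x)).mul_left (f x ^ 2), ?_⟩
    refine summable_of_hasFiniteSupport (hf.subset fun x hx hfx => hx ?_)
    simp [hfx]
  have hsnd : Summable fun p : Zd d × Zd d => f p.2 ^ 2 * (π p.1 * Q p.1 p.2) :=
    hfst.prod_symm.congr fun p => by simp only [Prod.fst_swap, Prod.snd_swap, hrev p.1 p.2]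
  refine ((hfst.add hsnd).mul_left 2).of_nonneg_of_le (dirichlet_summand_nonneg hQ hπ f)
    fun p => ?_
  nlinarith [mul_nonneg (sq_nonneg (f p.1 + f p.2)) (hw p.1 p.2)]

lemma dirichlet_nonneg (hQ : ∀ x y, 0 ≤ Q x y) (hπ : ∀ x, 0 ≤ π x) (f : Zd d → ℝ) :
    0 ≤ dirichlet π Q f :=
  mul_nonneg (by norm_num) (tsum_nonneg (dirichlet_summand_nonneg hQ hπ f))

lemma AssumptionA1.tsum_fwdDiff_boxMax_sq_le (hA : AssumptionA1 Q K δ) (hc : 0 < c)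
    (hδ : 0 < δ) (hQ : ∀ x y, 0 ≤ Q x y) (hrow : ∀ x, Summable (Q x)) (hπ : ∀ x, c ≤ π x)
    (hrev : ∀ x y, π x * Q x y = π y * Q y x) (hf : (Function.support f).Finite)
    {v : Zd d} (hv : maxNorm v ≤ 1) :
    ∑' k, Δ_[v] (boxMax K f) k ^ 2 ≤ 2 / (c * δ) * dirichlet π Q f := by
  have hπ0 : ∀ x, 0 ≤ π x := fun x => hc.le.trans (hπ x)
  have hcδ : 0 < c * δ := mul_pos hc hδ
  have hadj : ∀ k, maxNorm (k + v - k) ≤ 1 := fun k => by rwa [add_sub_cancel_left]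
  choose X hX Y _ hweight hdiff using fun k =>
    hA.exists_edge_abs_boxMax_sub_le hc.le hδ.le hπ hrev f (hadj k)
  have hinj : Function.Injective fun k => (X k, Y k) := fun k l h => by
    rw [← mem_box.mp (hX k), ← mem_box.mp (hX l), (Prod.mk.inj h).1]
  have hterm : ∀ k, c * δ * Δ_[v] (boxMax K f) k ^ 2 ≤
      (f (Y k) - f (X k)) ^ 2 * π (X k) * Q (X k) (Y k) := fun k => by
    rw [mul_comm, mul_assoc]
    exact mul_le_mul (sq_le_sq.mpr (hdiff k)) (hweight k) hcδ.le (sq_nonneg _)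
  have henergy := summable_dirichlet hQ hrow hπ0 hrev hf
  have hedges : Summable fun k => (f (Y k) - f (X k)) ^ 2 * π (X k) * Q (X k) (Y k) :=
    henergy.comp_injective (i := fun k => (X k, Y k)) hinj
  have hle : ∑' k, c * δ * Δ_[v] (boxMax K f) k ^ 2 ≤
      ∑' p : Zd d × Zd d, (f p.2 - f p.1) ^ 2 * π p.1 * Q p.1 p.2 :=
    calc ∑' k, c * δ * Δ_[v] (boxMax K f) k ^ 2
        ≤ ∑' k, (f (Y k) - f (X k)) ^ 2 * π (X k) * Q (X k) (Y k) :=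
          (hedges.of_nonneg_of_le (fun k => mul_nonneg hcδ.le (sq_nonneg _)) hterm).tsum_le_tsum
            hterm hedges
      _ ≤ ∑' p : Zd d × Zd d, (f p.2 - f p.1) ^ 2 * π p.1 * Q p.1 p.2 :=
          tsum_comp_le_tsum_of_inj henergy (dirichlet_summand_nonneg hQ hπ0 f) hinj
  rw [tsum_mul_left] at hle
  rw [dirichlet, div_mul_eq_mul_div, le_div_iff₀ hcδ]
  linarith

lemma dirichlet_indicator_one (hQ : ∀ x y, 0 ≤ Q x y) (hrow : ∀ x, Summable (Q x))
    (hπ : ∀ x, 0 ≤ π x) (hrev : ∀ x y, π x * Q x y = π y * Q y x) (A : Finset (Zd d)) :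
    dirichlet π Q ((A : Set (Zd d)).indicator 1) =
      ∑ x ∈ A, ∑' y, if y ∈ A then 0 else π x * Q x y := by
  set f : Zd d → ℝ := (A : Set (Zd d)).indicator 1 with hf
  set out : Zd d × Zd d → ℝ := fun p =>
    if p.1 ∈ A then (if p.2 ∈ A then 0 else π p.1 * Q p.1 p.2) else 0 with hout
  have hsplit : ∀ p : Zd d × Zd d,
      (f p.2 - f p.1) ^ 2 * π p.1 * Q p.1 p.2 = out p + out p.swap := fun p => by
    by_cases h₁ : p.1 ∈ A <;> by_cases h₂ : p.2 ∈ A <;> simp [hf, hout, h₁, h₂, hrev p.2 p.1]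
  have hout0 : ∀ p, 0 ≤ out p := fun p => by
    have := mul_nonneg (hπ p.1) (hQ p.1 p.2)
    simp only [hout]
    split_ifs <;> first | exact le_rfl | assumption
  have henergy := summable_dirichlet hQ hrow hπ hrev
    (f := f) (A.finite_toSet.subset Set.support_indicator_subset)
  have hsum : Summable out := henergy.of_nonneg_of_le hout0 fun p => by
    linarith [hsplit p, hout0 p.swap]
  have hswap : ∑' p : Zd d × Zd d, out p.swap = ∑' p, out p :=
    (Equiv.prodComm _ _).tsum_eq out
  calc dirichlet π Q f = 1 / 2 * (∑' p, out p + ∑' p : Zd d × Zd d, out p.swap) := by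
        rw [dirichlet, tsum_congr hsplit, hsum.tsum_add hsum.prod_symm]
    _ = ∑' p, out p := by
        rw [hswap]
        ring
    _ = ∑ x ∈ A, ∑' y, out (x, y) := by
        rw [hsum.tsum_prod, tsum_eq_sum (s := A) fun x hx => by simp [hout, hx]]
    _ = ∑ x ∈ A, ∑' y, if y ∈ A then 0 else π x * Q x y :=
        Finset.sum_congr rfl fun x hx => by simp [hout, hx]

end Kernel

section Inequalities

variable {d K : ℕ} {Q : Zd d → Zd d → ℝ} {π f : Zd d → ℝ} {c C δ : ℝ}

lemma l2norm_rpow_two_mul (hπ : ∀ x, 0 ≤ π x) (f : Zd d → ℝ) (s : ℝ) :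
    l2norm π f ^ (2 * s) = (∑' x, f x ^ 2 * π x) ^ s := by
  rw [l2norm, Real.rpow_mul (Real.sqrt_nonneg _), Real.rpow_two,
    Real.sq_sqrt (tsum_nonneg fun x => mul_nonneg (sq_nonneg _) (hπ x))]

lemma l1norm_nonneg (hπ : ∀ x, 0 ≤ π x) (f : Zd d → ℝ) : 0 ≤ l1norm π f :=
  tsum_nonneg fun x => mul_nonneg (abs_nonneg _) (hπ x)

lemma sum_le_mul_card_image_boxIndex (hC : 0 ≤ C) (hπ : ∀ x, π x ≤ C) (A : Finset (Zd d)) :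
    ∑ x ∈ A, π x ≤ C * (2 * K + 1) ^ d * (A.image (boxIndex K)).card := by
  have hcard : (A.card : ℝ) ≤ (2 * K + 1) ^ d * (A.image (boxIndex K)).card := by
    exact_mod_cast Finset.card_le_mul_card_image A _ fun k _ => card_filter_boxIndex_le A k
  calc ∑ x ∈ A, π x ≤ A.card * C := by
        simpa using Finset.sum_le_card_nsmul A π C fun x _ => hπ x
    _ ≤ (2 * K + 1) ^ d * (A.image (boxIndex K)).card * C := by gcongr
    _ = C * (2 * K + 1) ^ d * (A.image (boxIndex K)).card := by ring

lemma tsum_abs_boxMax_le_l1norm_div (K : ℕ) (hf : Summable f) (hc : 0 < c)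
    (hπ : ∀ x, π x ∈ Set.Icc c C) : ∑' k, |boxMax K f k| ≤ l1norm π f / c := by
  rw [le_div_iff₀' hc]
  exact (mul_le_mul_of_nonneg_left (tsum_abs_boxMax_le K hf) hc.le).trans
    (tsum_mul_mem_Icc (fun x => abs_nonneg (f x)) hf.abs hc.le hπ).1

lemma tsum_sq_mul_le_tsum_boxMax_sq (K : ℕ) (hf : Summable f) (hc : 0 ≤ c)
    (hπ : ∀ x, π x ∈ Set.Icc c C) :
    ∑' x, f x ^ 2 * π x ≤ C * (2 * K + 1) ^ d * ∑' k, boxMax K f k ^ 2 := by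
  rw [mul_assoc]
  exact (tsum_mul_mem_Icc (fun x => sq_nonneg (f x)) (summable_sq_of_summable hf) hc hπ).2.trans
    (mul_le_mul_of_nonneg_left (tsum_sq_le_tsum_boxMax_sq K hf)
      (hc.trans ((hπ 0).1.trans (hπ 0).2)))

lemma AssumptionA1.isoperimetric (hA : AssumptionA1 Q K δ) (hd : 0 < d) (hc : 0 < c)
    (hδ : 0 < δ) (hQ : ∀ x y, 0 ≤ Q x y) (hrow : ∀ x, Summable (Q x))
    (hπ : ∀ x, π x ∈ Set.Icc c C) (hrev : ∀ x y, π x * Q x y = π y * Q y x)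
    {A : Finset (Zd d)} (hne : A.Nonempty) :
    (∑ x ∈ A, π x) ^ (1 - 1 / (d : ℝ)) ≤
      (C * (2 * K + 1) ^ d) ^ (1 - 1 / (d : ℝ)) * (2 * d * (2 / (c * δ))) *
        ∑ x ∈ A, ∑' y, if y ∈ A then 0 else π x * Q x y := by
  have hπ0 : ∀ x, 0 ≤ π x := fun x => hc.le.trans (hπ x).1
  have hC : 0 ≤ C := (hπ0 0).trans (hπ 0).2
  have hexp : 0 ≤ 1 - 1 / (d : ℝ) :=
    sub_nonneg.mpr (div_le_one_of_le₀ (by exact_mod_cast hd) (by positivity))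
  have hcoarse := lattice_isoperimetric hd (hne.image (boxIndex K)) fun i => by
    rw [← boxMax_indicator_one]
    exact hA.tsum_fwdDiff_boxMax_sq_le hc hδ hQ hrow (fun x => (hπ x).1) hrev
      (A.finite_toSet.subset Set.support_indicator_subset) (maxNorm_single_one i)
  rw [dirichlet_indicator_one hQ hrow hπ0 hrev] at hcoarse
  set S := A.image (boxIndex K)
  set boundary := ∑ x ∈ A, ∑' y, if y ∈ A then 0 else π x * Q x y
  calc (∑ x ∈ A, π x) ^ (1 - 1 / (d : ℝ))
      ≤ (C * (2 * K + 1) ^ d * S.card) ^ (1 - 1 / (d : ℝ)) :=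
        Real.rpow_le_rpow (Finset.sum_nonneg fun x _ => hπ0 x)
          (sum_le_mul_card_image_boxIndex hC (fun x => (hπ x).2) A) hexp
    _ = (C * (2 * K + 1) ^ d) ^ (1 - 1 / (d : ℝ)) * (S.card : ℝ) ^ (1 - 1 / (d : ℝ)) :=
        Real.mul_rpow (by positivity) (by positivity)
    _ ≤ (C * (2 * K + 1) ^ d) ^ (1 - 1 / (d : ℝ)) * (2 * d * (2 / (c * δ) * boundary)) := by
        gcongr
    _ = _ := by ring

lemma AssumptionA1.nash (hA : AssumptionA1 Q K δ) (hd : 0 < d) (hc : 0 < c)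
    (hδ : 0 < δ) (hQ : ∀ x y, 0 ≤ Q x y) (hrow : ∀ x, Summable (Q x))
    (hπ : ∀ x, π x ∈ Set.Icc c C) (hrev : ∀ x y, π x * Q x y = π y * Q y x)
    (hf : (Function.support f).Finite) :
    l2norm π f ^ (2 + 4 / (d : ℝ)) ≤
      (C * (2 * K + 1) ^ d) ^ (1 + 2 / (d : ℝ)) * (8 * d ^ 2 / (c * δ)) / c ^ (4 / (d : ℝ)) *
        dirichlet π Q f * l1norm π f ^ (4 / (d : ℝ)) := by
  have hπ0 : ∀ x, 0 ≤ π x := fun x => hc.le.trans (hπ x).1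
  have hC : 0 ≤ C := (hπ0 0).trans (hπ 0).2
  have hD := dirichlet_nonneg hQ hπ0 f
  have hV := l1norm_nonneg hπ0 f
  have hsum : Summable f := summable_of_hasFiniteSupport hf
  have hcoarse := lattice_nash hd (summable_boxMax K hsum) fun i =>
    hA.tsum_fwdDiff_boxMax_sq_le hc hδ hQ hrow (fun x => (hπ x).1) hrev hf (maxNorm_single_one i)
  calc l2norm π f ^ (2 + 4 / (d : ℝ)) = (∑' x, f x ^ 2 * π x) ^ (1 + 2 / (d : ℝ)) := by
        rw [← l2norm_rpow_two_mul hπ0]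
        ring_nf
    _ ≤ (C * (2 * K + 1) ^ d * ∑' k, boxMax K f k ^ 2) ^ (1 + 2 / (d : ℝ)) :=
        Real.rpow_le_rpow (tsum_nonneg fun x => mul_nonneg (sq_nonneg _) (hπ0 x))
          (tsum_sq_mul_le_tsum_boxMax_sq K hsum hc.le hπ) (by positivity)
    _ = (C * (2 * K + 1) ^ d) ^ (1 + 2 / (d : ℝ)) *
          (∑' k, boxMax K f k ^ 2) ^ (1 + 2 / (d : ℝ)) :=
        Real.mul_rpow (by positivity) (tsum_nonneg fun k => sq_nonneg _)
    _ ≤ (C * (2 * K + 1) ^ d) ^ (1 + 2 / (d : ℝ)) *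
          (4 * d ^ 2 * (2 / (c * δ) * dirichlet π Q f) * (l1norm π f / c) ^ (4 / (d : ℝ))) := by
        gcongr
        refine hcoarse.trans ?_
        gcongr
        exact tsum_abs_boxMax_le_l1norm_div K hsum hc hπ
    _ = _ := by
        rw [Real.div_rpow hV hc.le]
        ring

end Inequalities

theorem isoperimetric_and_nash_from_assumptionA1_general
    (d : ℕ) (hd : 0 < d) (c C δ : ℝ) (K : ℕ)
    (hc : 0 < c) (hcC : c ≤ C) (hδ : 0 < δ) :
    ∃ κ κ' : ℝ, 0 < κ ∧ 0 < κ' ∧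
      ∀ (Q : Zd d → Zd d → ℝ) (π : Zd d → ℝ),
        (∀ x y, 0 ≤ Q x y) →
        (∀ x, Summable (Q x)) →
        (∀ x y, π x * Q x y = π y * Q y x) →
        (∀ x, c ≤ π x ∧ π x ≤ C) →
        AssumptionA1 Q K δ →
        (∀ A : Finset (Zd d), A.Nonempty →
            (∑ x ∈ A, π x) ^ ((1 : ℝ) - 1 / (d : ℝ))
              ≤ κ * ∑ x ∈ A, ∑' y, if y ∈ A then 0 else π x * Q x y) ∧
        (∀ f : Zd d → ℝ, (Function.support f).Finite →
            κ' * l2norm π f ^ ((2 : ℝ) + 4 / (d : ℝ)) * l1norm π f ^ (-(4 : ℝ) / (d : ℝ))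
              ≤ dirichlet π Q f) := by
  have hC : 0 < C := hc.trans_le hcC
  refine ⟨(C * (2 * K + 1) ^ d) ^ (1 - 1 / (d : ℝ)) * (2 * d * (2 / (c * δ))),
    ((C * (2 * K + 1) ^ d) ^ (1 + 2 / (d : ℝ)) * (8 * d ^ 2 / (c * δ)) / c ^ (4 / (d : ℝ)))⁻¹,
    by positivity, by positivity, fun Q π hQ hrow hrev hπ hA =>
      ⟨fun A => hA.isoperimetric hd hc hδ hQ hrow hπ hrev, fun f hf => ?_⟩⟩
  have hπ0 : ∀ x, 0 ≤ π x := fun x => hc.le.trans (hπ x).1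
  have hl1 := l1norm_nonneg hπ0 f
  rw [neg_div, Real.rpow_neg hl1, ← div_eq_mul_inv]
  refine div_le_of_le_mul₀ (Real.rpow_nonneg hl1 _) (dirichlet_nonneg hQ hπ0 f) ?_
  rw [inv_mul_le_iff₀ (by positivity), ← mul_assoc]
  exact hA.nash hd hc hδ hQ hrow hπ hrev hf

theorem isoperimetric_and_nash_from_assumptionA1
    (d : ℕ) (hd : 0 < d) (c C δ : ℝ) (K : ℕ)
    (hc : 0 < c) (hcC : c ≤ C) (hδ : 0 < δ) :
    ∃ κ κ' : ℝ, 0 < κ ∧ 0 < κ' ∧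
      ∀ (Q : Zd d → Zd d → ℝ) (π : Zd d → ℝ),
        (∀ x y, 0 ≤ Q x y) →
        (∀ x, HasSum (fun y => Q x y) 1) →
        (∀ x, 0 < π x) →
        (∀ x y, π x * Q x y = π y * Q y x) →
        (∀ x, c ≤ π x ∧ π x ≤ C) →
        AssumptionA1 Q K δ →
        (∀ A : Finset (Zd d), A.Nonempty →
            (∑ x ∈ A, π x) ^ ((1 : ℝ) - 1 / (d : ℝ))
              ≤ κ * ∑ x ∈ A, ∑' y, if y ∈ A then 0 else π x * Q x y) ∧
        (∀ f : Zd d → ℝ, (Function.support f).Finite →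
            κ' * l2norm π f ^ ((2 : ℝ) + 4 / (d : ℝ)) * l1norm π f ^ (-(4 : ℝ) / (d : ℝ))
              ≤ dirichlet π Q f) := by
  obtain ⟨κ, κ', hκ, hκ', h⟩ :=
    isoperimetric_and_nash_from_assumptionA1_general d hd c C δ K hc hcC hδ
  exact ⟨κ, κ', hκ, hκ', fun Q π hQ hQ1 _ => h Q π hQ fun x => (hQ1 x).summable⟩

end
end
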